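/- Let ∇ be a smooth torsion-free connection on a connected open subset of ℝ^m (m ≥ 3) which is projectively flat (P(R^∇_P) = 0 at every point P) and Ricci antisymmetric (the Ricci tensor of R^∇_P is antisymmetric at every point P). Then ∇ is flat: R^∇_P = 0 for every P. Consequently, a nonzero projectively flat, Ricci antisymmetric generalized algebraic curvature operator A ∈ 𝔄(ℝ^m) cannot be realized as the curvature at a point of any projectively flat, Ricci antisymmetric, torsion-free connection. -/

import Mathlib

/-!
Write `ω` for the Ricci tensor.  Projective flatness and antisymmetry of `ω` give
`R_{ijk}^l = c (2 ω_{ij} δ_k^l + ω_{ik} δ_j^l - ω_{jk} δ_i^l)` with `c = -1/(m+1)`.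

* Inserting this in the second Bianchi identity (`bianchi`) forces, since three distinct indices
  are available, first `dω = 0` and then the symmetry of `∇_n ω_{ik}` in `n` and `i`.  Being
  antisymmetric in `i, k` as well, `∇ω` vanishes (`ric_parallel`).
* The integrability condition of `∇ω = 0` is `R_{ab} · ω = 0` (`ricci_identity`).  Its `(a, b)`
  component reads `6 c ω_{ab}² = 0`, so `ω = 0` and hence `R = 0`.

All tensors with two free indices are handled as matrix-valued functions: `G_i` is the matrix with
`(l, k)` entry `Γ_{ik}^l`, so that `R_{ij} = ∂_i G_j - ∂_j G_i + [G_i, G_j]`, and `W` is the matrix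
of `ω`, for which `∇ω = 0` reads `∂_n W = G_nᵀ W + W G_n`.
-/

noncomputable section

/-- The curvature operator `R_{ijk}{}^l` at `P` of the torsion-free connection on `ℝ^m`
with Christoffel symbols `Γ`:
`R_{ijk}{}^l = ∂_{x_i}Γ_{jk}{}^l - ∂_{x_j}Γ_{ik}{}^l + Γ_{in}{}^l Γ_{jk}{}^n - Γ_{jn}{}^l Γ_{ik}{}^n`. -/
def curv {m : ℕ} (Γ : (Fin m → ℝ) → Fin m → Fin m → Fin m → ℝ) (P : Fin m → ℝ)
    (i j k l : Fin m) : ℝ :=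
  fderiv ℝ (fun x => Γ x j k l) P (Pi.single i 1)
    - fderiv ℝ (fun x => Γ x i k l) P (Pi.single j 1)
    + ∑ n, (Γ P i n l * Γ P j k n - Γ P j n l * Γ P i k n)

/-- The Ricci tensor `ρ_{jk} = R_{ijk}{}^i` of a curvature tensor given in components. -/
def ricC {m : ℕ} (R : Fin m → Fin m → Fin m → Fin m → ℝ) (j k : Fin m) : ℝ :=
  ∑ i, R i j k i

/-- Components of `H(Θ)(x,y)z = Θ(x,y)z - Θ(y,x)z + Θ(x,z)y - Θ(y,z)x`. -/
def HC {m : ℕ} (Θ : Fin m → Fin m → ℝ) (i j k l : Fin m) : ℝ :=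
  Θ i j * (if k = l then 1 else 0) - Θ j i * (if k = l then 1 else 0)
    + Θ i k * (if j = l then 1 else 0) - Θ j k * (if i = l then 1 else 0)

/-- Components of the Weyl projective curvature operator
`P(A) = A + (1/(m-1)) H(ρ_s(A)) + (1/(m+1)) H(ρ_a(A))`. -/
def PC {m : ℕ} (A : Fin m → Fin m → Fin m → Fin m → ℝ) (i j k l : Fin m) : ℝ :=
  A i j k l
    + ((m : ℝ) - 1)⁻¹ * HC (fun a b => (ricC A a b + ricC A b a) / 2) i j k l
    + ((m : ℝ) + 1)⁻¹ * HC (fun a b => (ricC A a b - ricC A b a) / 2) i j k l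

open Matrix

/-! ### Connection and curvature as matrix-valued functions -/

/-- Entrywise partial derivative `∂_{x_n} M` of a matrix-valued function. -/
def pd {m : ℕ} (n : Fin m) (M : (Fin m → ℝ) → Matrix (Fin m) (Fin m) ℝ) (x : Fin m → ℝ) :
    Matrix (Fin m) (Fin m) ℝ :=
  Matrix.of fun l k => fderiv ℝ (fun y => M y l k) x (Pi.single n 1)

/-- Entrywise smoothness on `U` of a matrix-valued function. -/
def SM {m : ℕ} (U : Set (Fin m → ℝ)) (M : (Fin m → ℝ) → Matrix (Fin m) (Fin m) ℝ) : Prop :=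
  ∀ l k, ContDiffOn ℝ (⊤ : ℕ∞) (fun x => M x l k) U

/-- The connection matrix `G_i`, with row index `l` and column index `k` for `Γ_{ik}^l`. -/
def conM {m : ℕ} (Γ : (Fin m → ℝ) → Fin m → Fin m → Fin m → ℝ) (i : Fin m) (x : Fin m → ℝ) :
    Matrix (Fin m) (Fin m) ℝ :=
  Matrix.of fun l k => Γ x i k l

/-- The curvature matrix `R_{ij}`, with row index `l` and column index `k` for `R_{ijk}^l`. -/
def curvM {m : ℕ} (Γ : (Fin m → ℝ) → Fin m → Fin m → Fin m → ℝ) (i j : Fin m) (x : Fin m → ℝ) :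
    Matrix (Fin m) (Fin m) ℝ :=
  pd i (conM Γ j) x - pd j (conM Γ i) x + (conM Γ i x * conM Γ j x - conM Γ j x * conM Γ i x)

theorem curvM_apply {m : ℕ} (Γ : (Fin m → ℝ) → Fin m → Fin m → Fin m → ℝ) (i j : Fin m)
    (x : Fin m → ℝ) (l k : Fin m) : curvM Γ i j x l k = curv Γ x i j k l := by
  simp [curvM, curv, pd, conM, Matrix.mul_apply, Finset.sum_sub_distrib]

/-! ### Entrywise partial derivatives -/

section calculus

variable {m : ℕ} {U : Set (Fin m → ℝ)} {M N : (Fin m → ℝ) → Matrix (Fin m) (Fin m) ℝ}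

theorem SM.diffAt (hM : SM U M) (hU : IsOpen U) {x : Fin m → ℝ} (hx : x ∈ U) (l k : Fin m) :
    DifferentiableAt ℝ (fun y => M y l k) x :=
  ((hM l k).contDiffAt (hU.mem_nhds hx)).differentiableAt (by simp)

theorem SM.add (hM : SM U M) (hN : SM U N) : SM U (fun x => M x + N x) := fun l k =>
  (hM l k).add (hN l k)

theorem SM.sub (hM : SM U M) (hN : SM U N) : SM U (fun x => M x - N x) := fun l k =>
  (hM l k).sub (hN l k)

theorem SM.mul (hM : SM U M) (hN : SM U N) : SM U (fun x => M x * N x) := fun l k => by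
  simp only [Matrix.mul_apply]
  exact ContDiffOn.sum fun p _ => (hM l p).mul (hN p k)

theorem SM.transpose (hM : SM U M) : SM U (fun x => (M x)ᵀ) := fun l k => hM k l

theorem SM.pd (hM : SM U M) (hU : IsOpen U) (n : Fin m) : SM U (pd n M) := fun l k =>
  ((hM l k).fderiv_of_isOpen hU (by simp)).clm_apply contDiffOn_const

theorem pd_add (hM : SM U M) (hN : SM U N) (hU : IsOpen U) (n : Fin m) {x : Fin m → ℝ}
    (hx : x ∈ U) : pd n (fun y => M y + N y) x = pd n M x + pd n N x := by
  ext l k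
  simp [pd, fderiv_fun_add (hM.diffAt hU hx l k) (hN.diffAt hU hx l k)]

theorem pd_sub (hM : SM U M) (hN : SM U N) (hU : IsOpen U) (n : Fin m) {x : Fin m → ℝ}
    (hx : x ∈ U) : pd n (fun y => M y - N y) x = pd n M x - pd n N x := by
  ext l k
  simp [pd, fderiv_fun_sub (hM.diffAt hU hx l k) (hN.diffAt hU hx l k)]

theorem pd_mul (hM : SM U M) (hN : SM U N) (hU : IsOpen U) (n : Fin m) {x : Fin m → ℝ}
    (hx : x ∈ U) : pd n (fun y => M y * N y) x = pd n M x * N x + M x * pd n N x := by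
  ext l k
  simp only [pd, Matrix.mul_apply, Matrix.add_apply, Matrix.of_apply]
  rw [fderiv_fun_sum fun p _ => (hM.diffAt hU hx l p).fun_mul (hN.diffAt hU hx p k),
    ← Finset.sum_add_distrib, _root_.sum_apply]
  refine Finset.sum_congr rfl fun p _ => ?_
  rw [fderiv_fun_mul (hM.diffAt hU hx l p) (hN.diffAt hU hx p k)]
  simp
  ring

theorem pd_transpose (n : Fin m) (x : Fin m → ℝ) : pd n (fun y => (M y)ᵀ) x = (pd n M x)ᵀ := rfl

theorem pd_congr (hU : IsOpen U) (h : ∀ y ∈ U, M y = N y) (n : Fin m) {x : Fin m → ℝ}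
    (hx : x ∈ U) : pd n M x = pd n N x := by
  ext l k
  have : (fun y => M y l k) =ᶠ[nhds x] fun y => N y l k := by
    filter_upwards [hU.mem_nhds hx] with y hy
    rw [h y hy]
  simp [pd, this.fderiv_eq]

theorem pd_comm (hM : SM U M) (hU : IsOpen U) (a b : Fin m) {x : Fin m → ℝ} (hx : x ∈ U) :
    pd a (pd b M) x = pd b (pd a M) x := by
  ext l k
  have hc := (hM l k).contDiffAt (hU.mem_nhds hx)
  have hs : IsSymmSndFDerivAt ℝ (fun y => M y l k) x :=
    hc.isSymmSndFDerivAt (by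
      rw [minSmoothness_of_isRCLikeNormedField]
      exact WithTop.coe_le_coe.mpr le_top)
  have hd : DifferentiableAt ℝ (fderiv ℝ (fun y => M y l k)) x :=
    (hc.fderiv_right (m := 1) (by norm_cast)).differentiableAt (by simp)
  have key : ∀ v w : Fin m → ℝ, fderiv ℝ (fun y => fderiv ℝ (fun y => M y l k) y v) x w
      = fderiv ℝ (fderiv ℝ (fun y => M y l k)) x w v := by
    intro v w
    rw [fderiv_clm_apply hd (differentiableAt_const v)]
    simp
  simp only [pd, Matrix.of_apply]
  rw [key, key]
  exact hs.eq _ _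

end calculus

/-! ### Bianchi and Ricci identities -/

/-- The second Bianchi identity, with the covariant derivative taken only in the endomorphism
slot: the corrections in the two form slots cancel for a torsion-free connection. -/
theorem bianchi {m : ℕ} {U : Set (Fin m → ℝ)} {Γ : (Fin m → ℝ) → Fin m → Fin m → Fin m → ℝ}
    (hU : IsOpen U) (hG : ∀ i, SM U (conM Γ i)) {x : Fin m → ℝ} (hx : x ∈ U) (n i j : Fin m) :
    (pd n (curvM Γ i j) x + (conM Γ n x * curvM Γ i j x - curvM Γ i j x * conM Γ n x))
    + (pd i (curvM Γ j n) x + (conM Γ i x * curvM Γ j n x - curvM Γ j n x * conM Γ i x))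
    + (pd j (curvM Γ n i) x + (conM Γ j x * curvM Γ n i x - curvM Γ n i x * conM Γ j x)) = 0 := by
  have key : ∀ a b c : Fin m, pd a (curvM Γ b c) x
      = pd a (pd b (conM Γ c)) x - pd a (pd c (conM Γ b)) x
        + ((pd a (conM Γ b) x * conM Γ c x + conM Γ b x * pd a (conM Γ c) x)
          - (pd a (conM Γ c) x * conM Γ b x + conM Γ c x * pd a (conM Γ b) x)) := by
    intro a b c
    have h1 := (hG c).pd hU b
    have h2 := (hG b).pd hU c
    have h3 := (hG b).mul (hG c)
    have h4 := (hG c).mul (hG b)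
    unfold curvM
    rw [pd_add (h1.sub h2) (h3.sub h4) hU a hx, pd_sub h1 h2 hU a hx, pd_sub h3 h4 hU a hx,
      pd_mul (hG b) (hG c) hU a hx, pd_mul (hG c) (hG b) hU a hx]
  rw [key, key, key, pd_comm (hG n) hU i j hx, pd_comm (hG i) hU n j hx,
    pd_comm (hG j) hU i n hx]
  simp only [curvM]
  noncomm_ring

/-- A parallel bilinear form `W` is annihilated by the curvature. -/
theorem ricci_identity {m : ℕ} {U : Set (Fin m → ℝ)}
    {Γ : (Fin m → ℝ) → Fin m → Fin m → Fin m → ℝ} {W : (Fin m → ℝ) → Matrix (Fin m) (Fin m) ℝ}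
    (hU : IsOpen U) (hG : ∀ i, SM U (conM Γ i)) (hW : SM U W)
    (hpar : ∀ n, ∀ y ∈ U, pd n W y = (conM Γ n y)ᵀ * W y + W y * conM Γ n y)
    {x : Fin m → ℝ} (hx : x ∈ U) (a b : Fin m) :
    (curvM Γ a b x)ᵀ * W x + W x * curvM Γ a b x = 0 := by
  have key : ∀ a b, pd a (pd b W) x
      = (pd a (conM Γ b) x)ᵀ * W x
        + (conM Γ b x)ᵀ * ((conM Γ a x)ᵀ * W x + W x * conM Γ a x)
        + (((conM Γ a x)ᵀ * W x + W x * conM Γ a x) * conM Γ b x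
        + W x * pd a (conM Γ b) x) := by
    intro a b
    have hT := (hG b).transpose
    rw [pd_congr hU (hpar b) a hx, pd_add (hT.mul hW) (hW.mul (hG b)) hU a hx,
      pd_mul hT hW hU a hx, pd_mul hW (hG b) hU a hx, pd_transpose, hpar a x hx]
  have h := pd_comm hW hU a b hx
  rw [key, key, ← sub_eq_zero] at h
  rw [← h]
  simp only [curvM, Matrix.transpose_add, Matrix.transpose_sub, Matrix.transpose_mul]
  noncomm_ring

/-! ### Projectively flat, Ricci antisymmetric connections -/

/-- Since `ρ_s = 0`, the equation `P(A) = 0` expresses `A` through its Ricci tensor. -/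
theorem eq_of_PC {m : ℕ} {A : Fin m → Fin m → Fin m → Fin m → ℝ}
    (hP : ∀ i j k l, PC A i j k l = 0) (hr : ∀ i j, ricC A i j = - ricC A j i)
    (i j k l : Fin m) :
    A i j k l = -((m : ℝ) + 1)⁻¹ * (2 * ricC A i j * (if k = l then 1 else 0)
      + ricC A i k * (if j = l then 1 else 0) - ricC A j k * (if i = l then 1 else 0)) := by
  have h := hP i j k l
  simp only [PC, HC] at h
  rw [hr j i, hr k i, hr k j] at h
  linear_combination h

/-- An antisymmetric form `W` that determines the curvature as in `eq_of_PC` is parallel.  Both the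
Bianchi identity and the vanishing of `dW` are used at three distinct indices, whence `3 ≤ m`. -/
theorem ric_parallel {m : ℕ} (hm : 3 ≤ m) {U : Set (Fin m → ℝ)}
    {Γ : (Fin m → ℝ) → Fin m → Fin m → Fin m → ℝ} {W : (Fin m → ℝ) → Matrix (Fin m) (Fin m) ℝ}
    (hU : IsOpen U) (hG : ∀ i, SM U (conM Γ i)) (hW : SM U W)
    (hsym : ∀ x ∈ U, ∀ i j k, Γ x i j k = Γ x j i k)
    (hanti : ∀ x ∈ U, ∀ i j, W x i j = - W x j i)
    {c : ℝ} (hc : c ≠ 0)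
    (hR : ∀ x ∈ U, ∀ i j l k, curvM Γ i j x l k = c * (2 * W x i j * (if k = l then 1 else 0)
      + W x i k * (if j = l then 1 else 0) - W x j k * (if i = l then 1 else 0)))
    (n : Fin m) {x : Fin m → ℝ} (hx : x ∈ U) :
    pd n W x = (conM Γ n x)ᵀ * W x + W x * conM Γ n x := by
  have hpanti : ∀ n i j, pd n W x i j = - pd n W x j i := by
    intro n i j
    have : pd n W x = pd n (fun y => 0 - (W y)ᵀ) x :=
      pd_congr hU (fun y hy => by ext i j; simpa using hanti y hy i j) n hx
    rw [pd_sub (M := fun _ => 0) (fun _ _ => contDiffOn_const) hW.transpose hU n hx,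
      pd_transpose] at this
    simpa [pd] using congrFun (congrFun this i) j
  -- `S n i k = ∑ p, Γ_{nk}^p ω_{ip}`, the correction term in the second slot of `∇_n ω_{ik}`
  set S : Fin m → Fin m → Fin m → ℝ := fun n i k => (W x * conM Γ n x) i k with hS
  have hSsym : ∀ n i k, S n i k = S k i n := by
    intro n i k
    simp only [hS, Matrix.mul_apply, conM, Matrix.of_apply]
    exact Finset.sum_congr rfl fun p _ => by rw [hsym x hx]
  have hpdR : ∀ n i j l k, pd n (curvM Γ i j) x l k
      = c * (2 * pd n W x i j * (if k = l then 1 else 0)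
      + pd n W x i k * (if j = l then 1 else 0) - pd n W x j k * (if i = l then 1 else 0)) := by
    intro n i j l k
    have h1 : (fun y => curvM Γ i j y l k) =ᶠ[nhds x] fun y =>
        c * (2 * W y i j * (if k = l then 1 else 0)
          + W y i k * (if j = l then 1 else 0) - W y j k * (if i = l then 1 else 0)) := by
      filter_upwards [hU.mem_nhds hx] with y hy
      exact hR y hy i j l k
    have d := fun a b => (hW.diffAt hU hx a b).hasFDerivAt
    have h2 := (((((d i j).const_mul 2).mul_const (if k = l then (1 : ℝ) else 0)).add
      ((d i k).mul_const (if j = l then (1 : ℝ) else 0))).sub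
      ((d j k).mul_const (if i = l then (1 : ℝ) else 0))).const_mul c
    have h3 := (h2.congr_of_eventuallyEq h1).fderiv
    simp only [pd, Matrix.of_apply, h3, _root_.add_apply, _root_.sub_apply, _root_.smul_apply,
      smul_eq_mul]
    ring
  have hcomm : ∀ n i j l k, (conM Γ n x * curvM Γ i j x - curvM Γ i j x * conM Γ n x) l k
      = c * (W x i k * Γ x n j l - W x j k * Γ x n i l
        - S n i k * (if j = l then 1 else 0) + S n j k * (if i = l then 1 else 0)) := by
    intro n i j l k
    have e : curvM Γ i j x = Matrix.of fun l k => c * (2 * W x i j * (if k = l then 1 else 0)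
      + W x i k * (if j = l then 1 else 0) - W x j k * (if i = l then 1 else 0)) := by
      ext l k; exact hR x hx i j l k
    have e1 : (conM Γ n x * curvM Γ i j x) l k
        = c * (2 * W x i j * Γ x n k l + W x i k * Γ x n j l - W x j k * Γ x n i l) := by
      rw [e]
      simp only [Matrix.mul_apply, conM, Matrix.of_apply]
      have : ∀ p, Γ x n p l * (c * (2 * W x i j * (if k = p then 1 else 0)
          + W x i k * (if j = p then 1 else 0) - W x j k * (if i = p then 1 else 0)))
          = (if k = p then c * (2 * W x i j * Γ x n p l) else 0)
            + (if j = p then c * (W x i k * Γ x n p l) else 0)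
            - (if i = p then c * (W x j k * Γ x n p l) else 0) := by
        intro p
        split_ifs <;> ring
      simp only [this, Finset.sum_sub_distrib, Finset.sum_add_distrib, Finset.sum_ite_eq,
        Finset.mem_univ, if_true]
      ring
    have e2 : (curvM Γ i j x * conM Γ n x) l k
        = c * (2 * W x i j * Γ x n k l + S n i k * (if j = l then 1 else 0)
          - S n j k * (if i = l then 1 else 0)) := by
      rw [e]
      simp only [hS, Matrix.mul_apply, conM, Matrix.of_apply]
      have : ∀ p, (c * (2 * W x i j * (if p = l then 1 else 0)
          + W x i p * (if j = l then 1 else 0) - W x j p * (if i = l then 1 else 0))) * Γ x n k p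
          = (if p = l then c * (2 * W x i j * Γ x n k p) else 0)
            + (c * (if j = l then 1 else 0)) * (W x i p * Γ x n k p)
            - (c * (if i = l then 1 else 0)) * (W x j p * Γ x n k p) := by
        intro p
        by_cases hp : p = l <;> simp only [hp, if_true, if_false] <;> ring
      simp only [this, Finset.sum_sub_distrib, Finset.sum_add_distrib, Finset.sum_ite_eq',
        Finset.mem_univ, if_true, ← Finset.mul_sum]
      ring
    rw [Matrix.sub_apply, e1, e2]
    ring
  -- the component `l = j` of the Bianchi identity for three distinct form indices
  have hB : ∀ n i j k, n ≠ i → i ≠ j → n ≠ j →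
      2 * (pd n W x i j + pd i W x j n + pd j W x n i) * (if k = j then 1 else 0)
        + (pd n W x i k - S n i k) - (pd i W x n k - S i n k) = 0 := by
    intro n i j k hni hij hnj
    have h := congrFun (congrFun (bianchi hU hG hx n i j) j) k
    simp only [Matrix.add_apply, hpdR, hcomm, Matrix.zero_apply] at h
    rw [hsym x hx i n, hsym x hx j i, hsym x hx j n] at h
    simp only [hij, hnj, if_true, if_false] at h
    refine mul_left_cancel₀ hc ?_
    linear_combination h
  have hd : ∀ n i j, n ≠ i → i ≠ j → n ≠ j →
      pd n W x i j + pd i W x j n + pd j W x n i = 0 := by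
    intro n i j hni hij hnj
    have h1 := hB n i j j hni hij hnj
    have h2 := hB i j n n hij hnj.symm hni.symm
    have h3 := hB j n i i hnj.symm hni hij.symm
    simp only [if_true] at h1 h2 h3
    rw [hpanti i n j] at h1
    rw [hpanti j i n] at h2
    rw [hpanti n j i] at h3
    rw [hSsym i n j] at h1
    rw [hSsym j i n] at h2
    rw [hSsym n j i] at h3
    linarith
  have hT : ∀ n i k, pd n W x i k - S n i k = pd i W x n k - S i n k := by
    intro n i k
    by_cases hni : n = i
    · rw [hni]
    obtain ⟨j, hj⟩ : ∃ j, j ∉ ({n, i} : Finset (Fin m)) := by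
      by_contra! hcon
      have h1 : (Finset.univ : Finset (Fin m)).card ≤ ({n, i} : Finset (Fin m)).card :=
        Finset.card_le_card fun a _ => hcon a
      have h2 : ({n, i} : Finset (Fin m)).card ≤ 2 := Finset.card_le_two
      simp at h1
      omega
    simp only [Finset.mem_insert, Finset.mem_singleton, not_or] at hj
    have h1 := hB n i j k hni (Ne.symm hj.2) (Ne.symm hj.1)
    rw [hd n i j hni (Ne.symm hj.2) (Ne.symm hj.1)] at h1
    linarith
  have hWt : (W x)ᵀ = - W x := by
    ext i j
    simpa using hanti x hx j i
  have hGW : ∀ n i k, ((conM Γ n x)ᵀ * W x) i k = - S n k i := by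
    intro n i k
    have : (conM Γ n x)ᵀ * W x = - (W x * conM Γ n x)ᵀ := by
      rw [Matrix.transpose_mul, hWt]
      simp
    rw [this]
    rfl
  ext i k
  rw [Matrix.add_apply, hGW]
  change pd n W x i k = - S n k i + S n i k
  -- a tensor symmetric in the first two and antisymmetric in the last two indices vanishes
  linarith [hT n i k, hT i k n, hT k n i, hpanti n i k, hpanti i k n, hpanti k n i,
    hSsym n i k, hSsym n k i, hSsym i n k]

theorem flat_of_projFlat_ricAnti {m : ℕ} (hm : 3 ≤ m) {U : Set (Fin m → ℝ)}
    {Γ : (Fin m → ℝ) → Fin m → Fin m → Fin m → ℝ} (hU : IsOpen U)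
    (hΓ : ∀ i j k, ContDiffOn ℝ (⊤ : ℕ∞) (fun x => Γ x i j k) U)
    (hsym : ∀ x ∈ U, ∀ i j k, Γ x i j k = Γ x j i k)
    (hP : ∀ P ∈ U, ∀ i j k l, PC (curv Γ P) i j k l = 0)
    (hr : ∀ P ∈ U, ∀ i j, ricC (curv Γ P) i j = - ricC (curv Γ P) j i)
    {x : Fin m → ℝ} (hx : x ∈ U) (i j k l : Fin m) : curv Γ x i j k l = 0 := by
  have hG : ∀ i, SM U (conM Γ i) := fun i l k => hΓ i k l
  have hcurv : ∀ i j, SM U (curvM Γ i j) := fun i j =>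
    (((hG j).pd hU i).sub ((hG i).pd hU j)).add (((hG i).mul (hG j)).sub ((hG j).mul (hG i)))
  let W : (Fin m → ℝ) → Matrix (Fin m) (Fin m) ℝ := fun y => Matrix.of (ricC (curv Γ y))
  have hW : SM U W := by
    intro a b
    have : (fun y => W y a b) = fun y => ∑ p, curvM Γ p a y p b := by
      funext y
      simp [W, ricC, curvM_apply]
    rw [this]
    exact ContDiffOn.sum fun p _ => hcurv p a p b
  have hR := fun y (hy : y ∈ U) => eq_of_PC (hP y hy) (hr y hy)
  have hc : -((m : ℝ) + 1)⁻¹ ≠ 0 := neg_ne_zero.mpr (by positivity)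
  set c : ℝ := -((m : ℝ) + 1)⁻¹
  have hRM : ∀ y ∈ U, ∀ i j l k, curvM Γ i j y l k
      = c * (2 * W y i j * (if k = l then 1 else 0)
      + W y i k * (if j = l then 1 else 0) - W y j k * (if i = l then 1 else 0)) :=
    fun y hy i j l k => (curvM_apply Γ i j y l k).trans (hR y hy i j k l)
  have hpar := fun n y (hy : y ∈ U) => ric_parallel hm hU hG hW hsym hr hc hRM n hy
  have hzero : ∀ a b, W x a b = 0 := by
    intro a b
    have h := congrFun (congrFun (ricci_identity hU hG hW hpar hx a b) a) b
    have haa : W x a a = 0 := by linarith [hr x hx a a, show W x a a = ricC (curv Γ x) a a from rfl]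
    have hbb : W x b b = 0 := by linarith [hr x hx b b, show W x b b = ricC (curv Γ x) b b from rfl]
    have hba : W x b a = - W x a b := hr x hx b a
    have e : ∀ p, c * (2 * W x a b * (if a = p then 1 else 0)
          + W x a a * (if b = p then 1 else 0) - W x b a * (if a = p then 1 else 0)) * W x p b
        + W x a p * (c * (2 * W x a b * (if b = p then 1 else 0)
          + W x a b * (if b = p then 1 else 0) - W x b b * (if a = p then 1 else 0)))
        = (if a = p then 3 * c * W x a b * W x p b else 0)
          + (if b = p then 3 * c * W x a b * W x a p else 0) := by
      intro p
      rw [haa, hbb, hba]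
      split_ifs <;> ring
    simp only [Matrix.add_apply, Matrix.mul_apply, Matrix.transpose_apply, hRM x hx,
      Matrix.zero_apply] at h
    rw [← Finset.sum_add_distrib] at h
    simp only [e, Finset.sum_add_distrib, Finset.sum_ite_eq, Finset.mem_univ, if_true] at h
    -- `e` collapses the sum to `6 c ω_{ab}²`
    have h6 : c * (W x a b * W x a b) = 0 := by linarith
    exact mul_self_eq_zero.mp ((mul_eq_zero.mp h6).resolve_left hc)
  rw [← curvM_apply, hRM x hx, hzero, hzero, hzero]
  simp

/-- **Theorem 1.8.** A projectively flat, Ricci antisymmetric, torsion-free connection on a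
connected open subset of `ℝ^m` (`m ≥ 3`) is flat.  Consequently a nonzero projectively
flat, Ricci antisymmetric generalized algebraic curvature operator is not geometrically
realizable by a projectively flat, Ricci antisymmetric, torsion-free connection. -/
theorem projectively_flat_ricci_antisymmetric_implies_flat
    (m : ℕ) (hm : 3 ≤ m) :
    (∀ (U : Set (Fin m → ℝ)) (Γ : (Fin m → ℝ) → Fin m → Fin m → Fin m → ℝ),
      IsOpen U → IsConnected U →
      (∀ i j k, ContDiffOn ℝ (⊤ : ℕ∞) (fun x => Γ x i j k) U) →
      (∀ x ∈ U, ∀ i j k, Γ x i j k = Γ x j i k) →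
      (∀ P ∈ U, ∀ i j k l, PC (curv Γ P) i j k l = 0) →
      (∀ P ∈ U, ∀ i j, ricC (curv Γ P) i j = - ricC (curv Γ P) j i) →
      ∀ P ∈ U, ∀ i j k l, curv Γ P i j k l = 0) ∧
    (∀ A : Fin m → Fin m → Fin m → Fin m → ℝ,
      (∀ i j k l, A i j k l = - A j i k l) →
      (∀ i j k l, A i j k l + A j k i l + A k i j l = 0) →
      (∀ i j k l, PC A i j k l = 0) →
      (∀ i j, ricC A i j = - ricC A j i) →
      A ≠ 0 →
      ¬ ∃ (U : Set (Fin m → ℝ)) (Γ : (Fin m → ℝ) → Fin m → Fin m → Fin m → ℝ)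
          (P : Fin m → ℝ),
          IsOpen U ∧ IsConnected U ∧ P ∈ U ∧
          (∀ i j k, ContDiffOn ℝ (⊤ : ℕ∞) (fun x => Γ x i j k) U) ∧
          (∀ x ∈ U, ∀ i j k, Γ x i j k = Γ x j i k) ∧
          (∀ Q ∈ U, ∀ i j k l, PC (curv Γ Q) i j k l = 0) ∧
          (∀ Q ∈ U, ∀ i j, ricC (curv Γ Q) i j = - ricC (curv Γ Q) j i) ∧
          (∀ i j k l, curv Γ P i j k l = A i j k l)) := by
  refine ⟨fun U Γ hU _ hΓ hsym hP hr P hx => flat_of_projFlat_ricAnti hm hU hΓ hsym hP hr hx, ?_⟩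
  rintro A - - - - hA ⟨U, Γ, P, hU, -, hx, hΓ, hsym, hP, hr, hRA⟩
  refine hA ?_
  funext i j k l
  rw [← hRA]
  exact flat_of_projFlat_ricAnti hm hU hΓ hsym hP hr hx i j k l
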